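/- arXiv:2406.18752 — 2 statements merged into one kernel-verified Lean document; each statement's English description precedes it below -/
import Mathlib

section
/- In the PP-a setup, for every i = 0, 1, …, n the profit collected by PP-a after processing the first i items satisfies Σ_{j ≤ i} v_j x_j ≥ ( ω̂_i·v̂ + Σ_{j ≤ i, j high} v_j w_j ) / (1 + ω̂_i), where v_j = v̂ for critical items and v_j > v̂ for high items. -/
open Finset

/-!
Write `P i` for the profit after `i` items. A high item raises `P i * (1 + ω̂ i)` by exactly
`v i * w i`. A critical item of which the amount `m` is counted raises it by
`m * (P i + v̂ * (1 - s i))`, and this is at least `m * v̂` because every unit of `s` has earned at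
least `v̂`, that is, `v̂ * s i ≤ P i`. Hence `P i * (1 + ω̂ i)` dominates
`ω̂ i * v̂ + ∑ v j * w j` throughout.
-/

section

variable {K : Type*} [Field K]

/-- The profit collected from the first `i` items (those with index `< i`) when the fraction `x j`
of the capacity is spent on item `j`. -/
def profit (v x : ℕ → K) (i : ℕ) : K :=
  ∑ j ∈ range i, v j * x j

/-- The total value of the high items among the first `i` items. -/
def highValue (high : ℕ → Bool) (v w : ℕ → K) (i : ℕ) : K :=
  ∑ j ∈ (range i).filter (fun j => high j = true), v j * w j

theorem profit_succ (v x : ℕ → K) (i : ℕ) : profit v x (i + 1) = profit v x i + v i * x i :=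
  sum_range_succ _ _

theorem highValue_succ_of_high {high : ℕ → Bool} {i : ℕ} (hi : high i = true) (v w : ℕ → K) :
    highValue high v w (i + 1) = highValue high v w i + v i * w i := by
  simp [highValue, sum_filter, sum_range_succ, hi]

theorem highValue_succ_of_critical {high : ℕ → Bool} {i : ℕ} (hi : high i = false)
    (v w : ℕ → K) : highValue high v w (i + 1) = highValue high v w i := by
  simp [highValue, sum_filter, sum_range_succ, hi]

variable [LinearOrder K]

/-- A run of PP-a on `n` items, indexed from `0`: `ωhat i` and `s i` are the values of `ω̂` and `s`
after the first `i` items, and `x i` is the allocation to item `i`. A high item may also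
have unit value exactly `vhat`. -/
structure IsPPaRun (n : ℕ) (w v : ℕ → K) (high : ℕ → Bool) (vhat : K) (ωhat s x : ℕ → K) :
    Prop where
  weight_nonneg : ∀ i < n, 0 ≤ w i
  vhat_le_of_high : ∀ i < n, high i = true → vhat ≤ v i
  value_of_critical : ∀ i < n, high i = false → v i = vhat
  ωhat_zero : ωhat 0 = 0
  s_zero : s 0 = 0
  ωhat_succ_of_high : ∀ i < n, high i = true → ωhat (i + 1) = ωhat i
  x_of_high : ∀ i < n, high i = true → x i = w i / (1 + ωhat i)
  ωhat_succ_of_critical : ∀ i < n, high i = false →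
    ωhat (i + 1) = ωhat i + min (w i) (1 - ωhat i)
  x_of_critical : ∀ i < n, high i = false →
    x i = (1 - s i) * min (w i) (1 - ωhat i) / (1 + ωhat (i + 1))
  s_succ : ∀ i < n, s (i + 1) = s i + x i

namespace IsPPaRun

variable {n i : ℕ} {w v : ℕ → K} {high : ℕ → Bool} {vhat : K} {ωhat s x : ℕ → K}

theorem s_eq_sum (run : IsPPaRun n w v high vhat ωhat s x) (hi : i ≤ n) :
    s i = ∑ j ∈ range i, x j := by
  induction i with
  | zero => simp [run.s_zero]
  | succ i ih => rw [run.s_succ i hi, ih (Nat.le_of_succ_le hi), sum_range_succ]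

variable [IsStrictOrderedRing K]

theorem ωhat_mem_Icc (run : IsPPaRun n w v high vhat ωhat s x) (hi : i ≤ n) :
    ωhat i ∈ Set.Icc 0 1 := by
  induction i with
  | zero => simp [run.ωhat_zero]
  | succ i ih =>
    have ωhat_mem := ih (Nat.le_of_succ_le hi)
    cases item : high i with
    | true => exact run.ωhat_succ_of_high i hi item ▸ ωhat_mem
    | false =>
      have ωhat_succ : ωhat (i + 1) = min (ωhat i + w i) 1 := by
        rw [run.ωhat_succ_of_critical i hi item, ← min_add_add_left, add_sub_cancel]
      rw [ωhat_succ]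
      exact ⟨le_min (add_nonneg ωhat_mem.1 (run.weight_nonneg i hi)) zero_le_one,
        min_le_right _ _⟩

theorem one_add_ωhat_pos (run : IsPPaRun n w v high vhat ωhat s x) (hi : i ≤ n) :
    0 < 1 + ωhat i :=
  add_pos_of_pos_of_nonneg one_pos (run.ωhat_mem_Icc hi).1

theorem min_weight_residual_nonneg (run : IsPPaRun n w v high vhat ωhat s x) (hi : i < n) :
    0 ≤ min (w i) (1 - ωhat i) :=
  le_min (run.weight_nonneg i hi) (sub_nonneg.2 (run.ωhat_mem_Icc hi.le).2)

theorem vhat_mul_x_le (run : IsPPaRun n w v high vhat ωhat s x) (hi : i < n) :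
    vhat * x i ≤ v i * x i := by
  cases item : high i with
  | true =>
    have x_nonneg : 0 ≤ x i := by
      rw [run.x_of_high i hi item]
      exact div_nonneg (run.weight_nonneg i hi) (run.one_add_ωhat_pos hi.le).le
    exact mul_le_mul_of_nonneg_right (run.vhat_le_of_high i hi item) x_nonneg
  | false => rw [run.value_of_critical i hi item]

theorem vhat_mul_s_le_profit (run : IsPPaRun n w v high vhat ωhat s x) (hi : i ≤ n) :
    vhat * s i ≤ profit v x i := by
  rw [run.s_eq_sum hi, mul_sum]
  exact sum_le_sum fun j hj => run.vhat_mul_x_le ((mem_range.1 hj).trans_le hi)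

theorem profit_succ_mul_of_high (run : IsPPaRun n w v high vhat ωhat s x) (hi : i < n)
    (item : high i = true) :
    profit v x (i + 1) * (1 + ωhat (i + 1)) = profit v x i * (1 + ωhat i) + v i * w i := by
  have x_mul : x i * (1 + ωhat i) = w i := by
    rw [run.x_of_high i hi item, div_mul_cancel₀ _ (run.one_add_ωhat_pos hi.le).ne']
  rw [profit_succ, run.ωhat_succ_of_high i hi item, add_mul, mul_assoc (v i), x_mul]

theorem profit_succ_mul_of_critical (run : IsPPaRun n w v high vhat ωhat s x) (hi : i < n)
    (item : high i = false) :
    profit v x (i + 1) * (1 + ωhat (i + 1)) =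
      profit v x i * (1 + ωhat i) +
        min (w i) (1 - ωhat i) * (profit v x i + vhat * (1 - s i)) := by
  have x_mul : x i * (1 + ωhat (i + 1)) = (1 - s i) * min (w i) (1 - ωhat i) := by
    rw [run.x_of_critical i hi item, div_mul_cancel₀ _ (run.one_add_ωhat_pos hi).ne']
  rw [profit_succ, run.value_of_critical i hi item, add_mul, mul_assoc vhat, x_mul,
    run.ωhat_succ_of_critical i hi item]
  ring

theorem ωhat_mul_vhat_add_highValue_le (run : IsPPaRun n w v high vhat ωhat s x) (hi : i ≤ n) :
    ωhat i * vhat + highValue high v w i ≤ profit v x i * (1 + ωhat i) := by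
  induction i with
  | zero => simp [profit, highValue, run.ωhat_zero]
  | succ i ih =>
    have bound := ih (Nat.le_of_succ_le hi)
    cases item : high i with
    | true =>
      rw [run.profit_succ_mul_of_high hi item, highValue_succ_of_high item,
        run.ωhat_succ_of_high i hi item]
      linarith
    | false =>
      have vhat_le : vhat ≤ profit v x i + vhat * (1 - s i) := by
        linarith [run.vhat_mul_s_le_profit (Nat.le_of_succ_le hi)]
      have gain := mul_le_mul_of_nonneg_left vhat_le (run.min_weight_residual_nonneg hi)
      rw [run.profit_succ_mul_of_critical hi item, highValue_succ_of_critical item,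
        run.ωhat_succ_of_critical i hi item]
      linarith

end IsPPaRun

theorem stmt3_general [IsStrictOrderedRing K] {n : ℕ} {w v : ℕ → K} {high : ℕ → Bool} {vhat : K}
    {ωhat s x : ℕ → K} (run : IsPPaRun n w v high vhat ωhat s x) {i : ℕ} (hi : i ≤ n) :
    (ωhat i * vhat + highValue high v w i) / (1 + ωhat i) ≤ profit v x i :=
  (div_le_iff₀ (run.one_add_ωhat_pos hi)).2 (run.ωhat_mul_vhat_add_highValue_le hi)

end

/-- In the PP-a setup, after processing the first `i` items, the collected
profit is at least `(ω̂ i * v̂ + Σ_{j < i, high} v j * w j) / (1 + ω̂ i)`. -/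
theorem stmt3 (n : ℕ) (w v : ℕ → ℝ) (high : ℕ → Bool) (vhat : ℝ) (hvhat : 0 < vhat)
    (hw : ∀ i < n, 0 ≤ w i)
    (hv : ∀ i < n, (high i = true → vhat < v i) ∧ (high i = false → v i = vhat))
    (ωhat s x ωtilde : ℕ → ℝ)
    (hω0 : ωhat 0 = 0) (hs0 : s 0 = 0)
    (hhigh : ∀ i < n, high i = true →
      ωhat (i + 1) = ωhat i ∧ x i = w i / (1 + ωhat i))
    (hcrit : ∀ i < n, high i = false →
      ωhat (i + 1) = ωhat i + min (w i) (1 - ωhat i) ∧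
      x i = (1 - s i) * min (w i) (1 - ωhat i) / (1 + ωhat (i + 1)))
    (hs : ∀ i < n, s (i + 1) = s i + x i)
    (hωt : ∀ i, ωtilde i = ∑ j ∈ (Finset.range i).filter (fun j => high j = true), w j) :
    ∀ i ≤ n,
      (ωhat i * vhat + ∑ j ∈ (Finset.range i).filter (fun j => high j = true), v j * w j)
          / (1 + ωhat i)
        ≤ ∑ j ∈ Finset.range i, v j * x j := by
  intro i hi
  exact stmt3_general
    { weight_nonneg := hw
      vhat_le_of_high := fun j hj item => ((hv j hj).1 item).le
      value_of_critical := fun j hj => (hv j hj).2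
      ωhat_zero := hω0
      s_zero := hs0
      ωhat_succ_of_high := fun j hj item => (hhigh j hj item).1
      x_of_high := fun j hj item => (hhigh j hj item).2
      ωhat_succ_of_critical := fun j hj item => (hcrit j hj item).1
      x_of_critical := fun j hj item => (hcrit j hj item).2
      s_succ := hs } hi
end

section
/- Let items i = 1,…,n have unit values v_i > 0 and weights w_i ≥ 0, let 0 < ℓ ≤ u, and assume the critical value v̂ satisfies ℓ ≤ v̂ ≤ u, where W := Σ_{i : v_i > v̂} w_i < 1 ≤ W + Σ_{i : v_i = v̂} w_i. Then there exists an allocation z with 0 ≤ z_i ≤ w_i, z_i = 0 for every item with v_i ∉ [ℓ, u], and Σ_i z_i ≤ 1, such that Σ_{i : v_i > v̂} v_i w_i + v̂·(1 − W) ≤ Σ_{i : v_i > u} v_i w_i + Σ_i v_i z_i. That is, the offline optimal profit of the full instance is at most the total value of all items above u plus the offline optimal profit of the instance restricted to items with values in [ℓ, u]. -/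
open Finset

/-!
The greedy allocation takes every item above the critical value `vhat` in full and the same
fraction of every item at `vhat`, chosen so that the knapsack is exactly filled; its profit is the
offline optimum. As `vhat ≤ u`, it takes every item above `u` in full, so discarding those items
loses exactly their total value and leaves an allocation supported on values in `[vhat, u]`.
-/

section Greedy

variable {ι K : Type*} [CommSemiring K] [LinearOrder K]

/-- The greedy fractional-knapsack allocation with critical value `θ`: items of value above `θ` are
taken in full, items of value exactly `θ` in the common fraction `c`, and the others not at
all. -/
def greedyAllocation (v w : ι → K) (θ c : K) (i : ι) : K :=
  if θ < v i then w i else if v i = θ then c * w i else 0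

variable {v w : ι → K} {θ c : K} {i : ι}

theorem greedyAllocation_of_lt_value (h : θ < v i) : greedyAllocation v w θ c i = w i :=
  if_pos h

theorem greedyAllocation_of_value_lt (h : v i < θ) : greedyAllocation v w θ c i = 0 := by
  rw [greedyAllocation, if_neg h.not_gt, if_neg h.ne]

section Bounds

variable [IsOrderedRing K]

theorem greedyAllocation_nonneg (hw : 0 ≤ w i) (hc : 0 ≤ c) : 0 ≤ greedyAllocation v w θ c i := by
  unfold greedyAllocation
  split_ifs
  exacts [hw, mul_nonneg hc hw, le_rfl]

theorem greedyAllocation_le (hw : 0 ≤ w i) (hc : c ≤ 1) : greedyAllocation v w θ c i ≤ w i := by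
  unfold greedyAllocation
  split_ifs
  exacts [le_rfl, mul_le_of_le_one_left hw hc, hw]

end Bounds

variable [Fintype ι]

theorem sum_mul_greedyAllocation (f v w : ι → K) (θ c : K) :
    ∑ i, f i * greedyAllocation v w θ c i =
      ∑ i with θ < v i, f i * w i + c * ∑ i with v i = θ, f i * w i := by
  rw [sum_filter, sum_filter, mul_sum, ← sum_add_distrib]
  refine sum_congr rfl fun i _ => ?_
  rcases lt_trichotomy θ (v i) with above | critical | below
  · simp [greedyAllocation, above, above.ne']
  · simp [greedyAllocation, ← critical, mul_left_comm]
  · simp [greedyAllocation, below.not_gt, below.ne]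

theorem sum_greedyAllocation (v w : ι → K) (θ c : K) :
    ∑ i, greedyAllocation v w θ c i = ∑ i with θ < v i, w i + c * ∑ i with v i = θ, w i := by
  simpa only [one_mul] using sum_mul_greedyAllocation (fun _ => 1) v w θ c

theorem sum_value_mul_greedyAllocation (v w : ι → K) (θ c : K) :
    ∑ i, v i * greedyAllocation v w θ c i =
      ∑ i with θ < v i, v i * w i + θ * (c * ∑ i with v i = θ, w i) := by
  have critical_value : ∑ i with v i = θ, v i * w i = θ * ∑ i with v i = θ, w i := by
    rw [mul_sum]
    exact sum_congr rfl fun i hi => by rw [(mem_filter.mp hi).2]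
  rw [sum_mul_greedyAllocation, critical_value, mul_left_comm]

end Greedy

theorem exists_mem_Icc_zero_one_mul_eq {K : Type*} [Field K] [LinearOrder K]
    [IsStrictOrderedRing K] {a b : K} (ha : 0 ≤ a) (hab : a ≤ b) :
    ∃ c ∈ Set.Icc (0 : K) 1, c * b = a :=
  ⟨a / b, ⟨div_nonneg ha (ha.trans hab), div_le_one_of_le₀ hab (ha.trans hab)⟩,
    div_mul_cancel_of_imp fun hb => le_antisymm (hab.trans_eq hb) ha⟩

theorem sum_mul_eq_sum_filter_add_sum_mul_indicator {ι R : Type*} [Fintype ι]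
    [NonUnitalNonAssocSemiring R] (p : ι → Prop) [DecidablePred p] (f : ι → R) {y w : ι → R}
    (hy : ∀ i, p i → y i = w i) :
    ∑ i, f i * y i = ∑ i with p i, f i * w i + ∑ i, f i * {i | ¬ p i}.indicator y i := by
  rw [sum_filter, ← sum_add_distrib]
  refine sum_congr rfl fun i _ => ?_
  by_cases hi : p i <;> simp [hi, hy]

theorem stmt7_general {ι K : Type*} [Fintype ι] [Field K] [LinearOrder K] [IsStrictOrderedRing K]
    {v w : ι → K} {ℓ u vhat C W : K} (hw : ∀ i, 0 ≤ w i) (hℓv : ℓ ≤ vhat) (hvu : vhat ≤ u)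
    (hWdef : W = ∑ i with vhat < v i, w i) (hWC : W ≤ C)
    (hCW : C ≤ W + ∑ i with v i = vhat, w i) :
    ∃ z : ι → K,
      (∀ i, 0 ≤ z i ∧ z i ≤ w i) ∧
      (∀ i, (v i < ℓ ∨ u < v i) → z i = 0) ∧
      ∑ i, z i ≤ C ∧
      ∑ i with vhat < v i, v i * w i + vhat * (C - W) =
        ∑ i with u < v i, v i * w i + ∑ i, v i * z i := by
  obtain ⟨c, ⟨hc0, hc1⟩, hc⟩ :=
    exists_mem_Icc_zero_one_mul_eq (sub_nonneg.mpr hWC) (sub_le_iff_le_add'.mpr hCW)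
  set y := greedyAllocation v w vhat c with hy
  have y_nonneg (i) : 0 ≤ y i := greedyAllocation_nonneg (hw i) hc0
  have indicator_le (i) : {i | ¬ u < v i}.indicator y i ≤ y i :=
    Set.indicator_le_self' (fun i _ => y_nonneg i) i
  have sum_y : ∑ i, y i = C := by
    rw [hy, sum_greedyAllocation, hc, ← hWdef, add_sub_cancel]
  refine ⟨{i | ¬ u < v i}.indicator y, fun i => ⟨?_, ?_⟩, ?_, ?_, ?_⟩
  · exact Set.indicator_nonneg (fun i _ => y_nonneg i) i
  · exact (indicator_le i).trans (greedyAllocation_le (hw i) hc1)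
  · rintro i (below | above)
    · exact Set.indicator_apply_eq_zero.mpr fun _ =>
        greedyAllocation_of_value_lt (below.trans_le hℓv)
    · exact Set.indicator_of_notMem (not_not_intro above) y
  · exact (sum_le_sum fun i _ => indicator_le i).trans_eq sum_y
  · rw [← hc, ← sum_value_mul_greedyAllocation]
    exact sum_mul_eq_sum_filter_add_sum_mul_indicator _ v fun i above =>
      greedyAllocation_of_lt_value (hvu.trans_lt above)

/-- The offline optimum of the full instance is at most the total value of
items above `u` plus the profit of some feasible allocation supported on
items with values in `[ℓ, u]`. -/
theorem stmt7 (n : ℕ) (v w : Fin n → ℝ) (ℓ u vhat : ℝ)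
    (hv : ∀ i, 0 < v i) (hw : ∀ i, 0 ≤ w i)
    (hℓ : 0 < ℓ) (hℓu : ℓ ≤ u)
    (hℓv : ℓ ≤ vhat) (hvu : vhat ≤ u)
    (W : ℝ)
    (hWdef : W = ∑ i ∈ Finset.univ.filter (fun i => vhat < v i), w i)
    (hW1 : W < 1)
    (hW2 : 1 ≤ W + ∑ i ∈ Finset.univ.filter (fun i => v i = vhat), w i) :
    ∃ z : Fin n → ℝ,
      (∀ i, 0 ≤ z i ∧ z i ≤ w i) ∧
      (∀ i, (v i < ℓ ∨ u < v i) → z i = 0) ∧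
      (∑ i, z i ≤ 1) ∧
      (∑ i ∈ Finset.univ.filter (fun i => vhat < v i), v i * w i) + vhat * (1 - W)
        ≤ (∑ i ∈ Finset.univ.filter (fun i => u < v i), v i * w i) + ∑ i, v i * z i := by
  obtain ⟨z, bounds, support, weight, profit⟩ := stmt7_general hw hℓv hvu hWdef hW1.le hW2
  exact ⟨z, bounds, support, weight, profit.le⟩
end
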